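/- arXiv:1308.5085 — 2 statements merged into one kernel-verified Lean document; each statement's English description precedes it below -/
import Mathlib

section
/- Let k be a field, d, α, β, γ ≥ 1, and R = k[X,Y,Z]/(X^d - F(Y,Z)) graded by deg X = α, deg Y = β, deg Z = γ, with F ∈ k[Y,Z] homogeneous of degree dα. Let a ≥ 1, write a = dq + r with 0 ≤ r ≤ d-1, and fix b, c ≥ 1. Then for every s ∈ ℤ there is a short exact sequence of graded R-modules 0 → Syz_R(X^{a+d-2r}, Y^b, Z^c)(s - αr) → Syz_R(X^{a-r}, Y^b, Z^c)(s - αr) ⊕ Syz_R(X^{a+d-r}, Y^b, Z^c)(s) → Syz_R(X^a, Y^b, Z^c)(s) → 0, where the first map sends (h₁,h₂,h₃) to ((X^{d-r}h₁, h₂, h₃), (-h₁, -X^r h₂, -X^r h₃)) and the second sends ((f₁,f₂,f₃),(g₁,g₂,g₃)) to (f₁ + X^{d-r}g₁, X^r f₂ + g₂, X^r f₃ + g₃). -/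
set_option maxHeartbeats 1000000
set_option synthInstance.maxHeartbeats 1000000

/-- The linear map `(a₁,…,aₙ) ↦ Σ aᵢ·gᵢ`; the syzygy module
`Syz_R(g₁,…,gₙ)` is its kernel. -/
noncomputable def syzMap {R : Type*} [CommRing R] {n : ℕ} (g : Fin n → R) :
    (Fin n → R) →ₗ[R] R :=
  ∑ i, (LinearMap.proj i : (Fin n → R) →ₗ[R] R).smulRight (g i)

/-- The diagonal linear map `(v₁,…,vₙ) ↦ (c₁v₁,…,cₙvₙ)`. -/
noncomputable def diagScale {R : Type*} [CommRing R] {n : ℕ} (cv : Fin n → R) :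
    (Fin n → R) →ₗ[R] (Fin n → R) :=
  LinearMap.pi fun j => cv j • (LinearMap.proj j : (Fin n → R) →ₗ[R] R)

/-- `v` is a homogeneous element whose components lie in the graded pieces
`𝒜 e₀, 𝒜 e₁, 𝒜 e₂`. -/
def pieceCond {k R : Type*} [Semiring k] [AddCommMonoid R] [Module k R]
    (𝒜 : ℤ → Submodule k R) (e0 e1 e2 : ℤ) (v : Fin 3 → R) : Prop :=
  v 0 ∈ 𝒜 e0 ∧ v 1 ∈ 𝒜 e1 ∧ v 2 ∈ 𝒜 e2

open Polynomial in
/-- Splitting a polynomial of degree `< m + n` as `p + T^n q`. -/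
lemma poly_split {A : Type*} [CommRing A] [Nontrivial A] (m n : ℕ) (u : A[X])
    (hu : u.degree < ((n + m : ℕ) : WithBot ℕ)) :
    ∃ p q : A[X], u = p + X ^ n * q ∧ p.degree < (n : WithBot ℕ) ∧
      q.degree < (m : WithBot ℕ) := by
  refine ⟨u %ₘ (X ^ n), u /ₘ (X ^ n), (modByMonic_add_div u (X ^ n)).symm, ?_, ?_⟩
  · have := degree_modByMonic_lt u (monic_X_pow (R := A) n)
    rwa [degree_X_pow] at this
  · rw [degree_lt_iff_coeff_zero] at hu ⊢
    intro j hj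
    have h1 : (u /ₘ (X ^ n)).coeff j = u.coeff (j + n) := by
      have h2 := degree_modByMonic_lt u (monic_X_pow (R := A) n)
      rw [degree_X_pow, degree_lt_iff_coeff_zero] at h2
      conv_rhs => rw [← modByMonic_add_div u (X ^ n), coeff_add, h2 _ (by omega),
        coeff_X_pow_mul, zero_add]
    rw [h1]
    exact hu _ (by omega)

open Polynomial in
/-- Abstract splitting of a relation. -/
lemma syz_split {A R : Type*} [CommRing A] [Nontrivial A] [CommRing R]
    (π : A[X] →+* R) (hπ : Function.Surjective π) (d q r b c : ℕ) (hd : 1 ≤ d) (hr : r < d)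
    (f y z : A) (hker : ∀ p, π p = 0 → (X ^ d - C f) ∣ p) (hf : π (X ^ d) = π (C f))
    (u0 u1 u2 : R)
    (h : u0 * π X ^ (d * q + r) + u1 * π (C y) ^ b + u2 * π (C z) ^ c = 0) :
    ∃ f0 f1 f2 g0 g1 g2 : R,
      f0 * π X ^ (d * q) + f1 * π (C y) ^ b + f2 * π (C z) ^ c = 0 ∧
      g0 * π X ^ (d * (q + 1)) + g1 * π (C y) ^ b + g2 * π (C z) ^ c = 0 ∧
      f0 + π X ^ (d - r) * g0 = u0 ∧ π X ^ r * f1 + g1 = u1 ∧ π X ^ r * f2 + g2 = u2 := by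
  have hmon : (X ^ d - C f : A[X]).Monic := monic_X_pow_sub_C f (by omega)
  have hdeg : (X ^ d - C f : A[X]).degree = (d : WithBot ℕ) := degree_X_pow_sub_C (by omega) f
  have hπ0 : π (X ^ d - C f) = 0 := by rw [map_sub, hf, sub_self]
  have lift : ∀ u : R, ∃ U : A[X], π U = u ∧ U.degree < (d : WithBot ℕ) := by
    intro u
    obtain ⟨U, rfl⟩ := hπ u
    refine ⟨U %ₘ (X ^ d - C f), ?_, ?_⟩
    · conv_rhs => rw [← modByMonic_add_div U (X ^ d - C f), map_add, map_mul, hπ0,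
        zero_mul, add_zero]
    · have := degree_modByMonic_lt U hmon
      rwa [hdeg] at this
  obtain ⟨U0, rfl, hU0⟩ := lift u0
  obtain ⟨U1, rfl, hU1⟩ := lift u1
  obtain ⟨U2, rfl, hU2⟩ := lift u2
  have e1 : d - r + r = d := by omega
  have e2 : r + (d - r) = d := by omega
  obtain ⟨p0, q0, rfl, hp0, hq0⟩ := poly_split r (d - r) U0 (by rwa [e1])
  obtain ⟨q1, p1, rfl, hq1, hp1⟩ := poly_split (d - r) r U1 (by rwa [e2])
  obtain ⟨q2, p2, rfl, hq2, hp2⟩ := poly_split (d - r) r U2 (by rwa [e2])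
  have mk : ∀ (n : ℕ) (v0 v1 v2 : A[X]) (a0 a1 a2 : A), v0.degree < (n : WithBot ℕ) →
      v1.degree < (n : WithBot ℕ) → v2.degree < (n : WithBot ℕ) →
      (v0 * C a0 + v1 * C a1 + v2 * C a2).degree < (n : WithBot ℕ) := by
    intro n v0 v1 v2 a0 a1 a2 h0 h1 h2
    rw [degree_lt_iff_coeff_zero] at *
    intro j hj
    simp [h0 j hj, h1 j hj, h2 j hj]
  have hPd := mk (d - r) p0 p1 p2 (f ^ q) (y ^ b) (z ^ c) hp0 hp1 hp2
  have hQd := mk r q0 q1 q2 (f ^ (q + 1)) (y ^ b) (z ^ c) hq0 hq1 hq2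
  set P := p0 * C (f ^ q) + p1 * C (y ^ b) + p2 * C (z ^ c) with hP
  set Q := q0 * C (f ^ (q + 1)) + q1 * C (y ^ b) + q2 * C (z ^ c) with hQ
  have hx : π X ^ d = π (C f) := by rw [← hf, map_pow]
  have hE : π (X ^ r * P + Q) = 0 := by
    rw [← h, hP, hQ]
    have e3 : π X ^ (d - r) * π X ^ r = π (C f) := by rw [← pow_add, e1, hx]
    simp only [map_add, map_mul, map_pow, pow_add, pow_mul, hx]
    linear_combination (-π q0 * π (C f) ^ q) * e3
  have hEd : (X ^ r * P + Q).degree < (X ^ d - C f : A[X]).degree := by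
    rw [hdeg, degree_lt_iff_coeff_zero]
    rw [degree_lt_iff_coeff_zero] at hPd hQd
    intro j hj
    rw [coeff_add, hQd j (by omega), add_zero, coeff_X_pow_mul', if_pos (by omega),
      hPd _ (by omega)]
  have hE0 : X ^ r * P + Q = 0 := by
    by_contra hne
    exact hmon.not_dvd_of_degree_lt hne hEd (hker _ hE)
  have hQ0 : Q = 0 := by
    by_contra hne
    refine (monic_X_pow (R := A) r).not_dvd_of_degree_lt hne (by rwa [degree_X_pow]) ?_
    exact ⟨-P, by linear_combination hE0⟩
  have hP0 : P = 0 := by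
    rw [hQ0, add_zero] at hE0
    exact (monic_X_pow (R := A) r).mul_right_eq_zero_iff.1 hE0
  refine ⟨π p0, π p1, π p2, π q0, π q1, π q2, ?_, ?_, ?_, ?_, ?_⟩
  · have := congrArg π hP0
    simpa only [hP, map_add, map_mul, map_pow, map_zero, pow_mul, hx] using this
  · have := congrArg π hQ0
    simpa only [hQ, map_add, map_mul, map_pow, map_zero, pow_mul, hx] using this
  · simp
  · simp [add_comm]
  · simp [add_comm]

/-- A polynomial in the variables `1, 2` is constant in the variable `0`. -/
lemma finSucc_of_supported {k : Type*} [Field k] (F : MvPolynomial (Fin 3) k)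
    (hF : F ∈ MvPolynomial.supported k {1, 2}) :
    ∃ f : MvPolynomial (Fin 2) k, MvPolynomial.finSuccEquiv k 2 F = Polynomial.C f := by
  rw [MvPolynomial.supported] at hF
  induction hF using Algebra.adjoin_induction with
  | mem x hx =>
    obtain ⟨i, hi, rfl⟩ := hx
    rcases hi with rfl | rfl
    · exact ⟨MvPolynomial.X 0, MvPolynomial.finSuccEquiv_X_succ (j := 0)⟩
    · exact ⟨MvPolynomial.X 1, MvPolynomial.finSuccEquiv_X_succ (j := 1)⟩
  | algebraMap a =>
    refine ⟨MvPolynomial.C a, ?_⟩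
    rw [MvPolynomial.algebraMap_eq, MvPolynomial.finSuccEquiv_apply]
    simp
  | add x y _ _ hx hy =>
    obtain ⟨f, hf⟩ := hx
    obtain ⟨g, hg⟩ := hy
    exact ⟨f + g, by rw [map_add, hf, hg, map_add]⟩
  | mul x y _ _ hx hy =>
    obtain ⟨f, hf⟩ := hx
    obtain ⟨g, hg⟩ := hy
    exact ⟨f * g, by rw [map_mul, hf, hg, map_mul]⟩

open MvPolynomial in
/-- The splitting for the ring `k[X,Y,Z]/(X^d - F)`. -/
lemma quot_split {k : Type*} [Field k] (d q r b c : ℕ) (hd : 1 ≤ d) (hr : r < d)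
    (F : MvPolynomial (Fin 3) k) (hF : F ∈ MvPolynomial.supported k {1, 2})
    (x y z u0 u1 u2 : MvPolynomial (Fin 3) k ⧸ Ideal.span {MvPolynomial.X 0 ^ d - F})
    (hx : x = Ideal.Quotient.mk _ (X 0)) (hy : y = Ideal.Quotient.mk _ (X 1))
    (hz : z = Ideal.Quotient.mk _ (X 2))
    (h : u0 * x ^ (d * q + r) + u1 * y ^ b + u2 * z ^ c = 0) :
    ∃ f0 f1 f2 g0 g1 g2 :
        MvPolynomial (Fin 3) k ⧸ Ideal.span {MvPolynomial.X 0 ^ d - F},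
      f0 * x ^ (d * q) + f1 * y ^ b + f2 * z ^ c = 0 ∧
      g0 * x ^ (d * (q + 1)) + g1 * y ^ b + g2 * z ^ c = 0 ∧
      f0 + x ^ (d - r) * g0 = u0 ∧ x ^ r * f1 + g1 = u1 ∧ x ^ r * f2 + g2 = u2 := by
  obtain ⟨f, hf⟩ := finSucc_of_supported F hF
  let e := finSuccEquiv k 2
  let π : Polynomial (MvPolynomial (Fin 2) k) →+*
      MvPolynomial (Fin 3) k ⧸ Ideal.span {MvPolynomial.X 0 ^ d - F} :=
    (Ideal.Quotient.mk _).comp (e.symm : _ →+* MvPolynomial (Fin 3) k)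
  have hπa : ∀ p, π (e p) = Ideal.Quotient.mk _ p := by
    intro p
    show Ideal.Quotient.mk _ (e.symm (e p)) = _
    rw [AlgEquiv.symm_apply_apply]
  have e0 : e (X 0) = Polynomial.X := finSuccEquiv_X_zero
  have e1 : e (X 1) = Polynomial.C (X 0) := finSuccEquiv_X_succ (j := 0)
  have e2 : e (X 2) = Polynomial.C (X 1) := finSuccEquiv_X_succ (j := 1)
  have eF : e (X 0 ^ d - F) = Polynomial.X ^ d - Polynomial.C f := by
    rw [map_sub, map_pow, e0, hf]
  have hx' : x = π Polynomial.X := by rw [hx, ← e0, hπa]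
  have hy' : y = π (Polynomial.C (X 0)) := by rw [hy, ← e1, hπa]
  have hz' : z = π (Polynomial.C (X 1)) := by rw [hz, ← e2, hπa]
  rw [hx', hy', hz'] at h ⊢
  refine syz_split π ?_ d q r b c hd hr f (X 0) (X 1) ?_ ?_ u0 u1 u2 h
  · intro w
    obtain ⟨p, rfl⟩ := Ideal.Quotient.mk_surjective w
    exact ⟨e p, hπa p⟩
  · intro p hp
    obtain ⟨p, rfl⟩ := e.surjective p
    rw [hπa, Ideal.Quotient.eq_zero_iff_mem, Ideal.mem_span_singleton] at hp
    rw [← eF]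
    exact map_dvd e hp
  · rw [← sub_eq_zero, ← map_sub, ← eF, hπa, Ideal.Quotient.eq_zero_iff_mem]
    exact Ideal.mem_span_singleton_self _

lemma syzMap_three {R : Type*} [CommRing R] (g v : Fin 3 → R) :
    syzMap g v = v 0 * g 0 + v 1 * g 1 + v 2 * g 2 := by
  simp [syzMap, Fin.sum_univ_three]

lemma diagScale_apply {R : Type*} [CommRing R] {n : ℕ} (g v : Fin n → R) (i : Fin n) :
    diagScale g v i = g i * v i := by
  simp [diagScale]

/-- The purely algebraic part of the statement. -/
lemma ses_aux {R : Type*} [CommRing R] (d q r b c : ℕ) (hr : r < d) (x y z : R)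
    (hsplit : ∀ u0 u1 u2 : R, u0 * x ^ (d * q + r) + u1 * y ^ b + u2 * z ^ c = 0 →
      ∃ f0 f1 f2 g0 g1 g2 : R,
      f0 * x ^ (d * q) + f1 * y ^ b + f2 * z ^ c = 0 ∧
      g0 * x ^ (d * (q + 1)) + g1 * y ^ b + g2 * z ^ c = 0 ∧
      f0 + x ^ (d - r) * g0 = u0 ∧ x ^ r * f1 + g1 = u1 ∧ x ^ r * f2 + g2 = u2) :
    let K := fun l : ℕ => LinearMap.ker (syzMap ![x ^ l, y ^ b, z ^ c])
    let Ψ : (Fin 3 → R) →ₗ[R] (Fin 3 → R) × (Fin 3 → R) :=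
      (diagScale ![x ^ (d - r), 1, 1]).prod (diagScale ![-1, -x ^ r, -x ^ r])
    let Φ : (Fin 3 → R) × (Fin 3 → R) →ₗ[R] (Fin 3 → R) :=
      (diagScale ![1, x ^ r, x ^ r]).comp (LinearMap.fst R _ _) +
        (diagScale ![x ^ (d - r), 1, 1]).comp (LinearMap.snd R _ _)
    (∀ v ∈ K (d * q + (d - r)), Ψ v ∈ (K (d * q)).prod (K (d * (q + 1)))) ∧
    (∀ w ∈ (K (d * q)).prod (K (d * (q + 1))), Φ w ∈ K (d * q + r)) ∧
    Function.Injective Ψ ∧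
    (∀ w ∈ (K (d * q)).prod (K (d * (q + 1))),
      (Φ w = 0 ↔ ∃ v ∈ K (d * q + (d - r)), Ψ v = w)) ∧
    (∀ u ∈ K (d * q + r), ∃ w ∈ (K (d * q)).prod (K (d * (q + 1))), Φ w = u) := by
  intro K Ψ Φ
  have hK : ∀ l v, v ∈ K l ↔ v 0 * x ^ l + v 1 * y ^ b + v 2 * z ^ c = 0 := by
    intro l v
    simp [K, LinearMap.mem_ker, syzMap_three]
  have p10 : ∀ v, (Ψ v).1 0 = x ^ (d - r) * v 0 := by intro v; simp [Ψ, diagScale_apply]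
  have p11 : ∀ v, (Ψ v).1 1 = v 1 := by intro v; simp [Ψ, diagScale_apply]
  have p12 : ∀ v, (Ψ v).1 2 = v 2 := by intro v; simp [Ψ, diagScale_apply]
  have p20 : ∀ v, (Ψ v).2 0 = - v 0 := by intro v; simp [Ψ, diagScale_apply]
  have p21 : ∀ v, (Ψ v).2 1 = - (x ^ r * v 1) := by intro v; simp [Ψ, diagScale_apply]
  have p22 : ∀ v, (Ψ v).2 2 = - (x ^ r * v 2) := by intro v; simp [Ψ, diagScale_apply]
  have f0 : ∀ w, Φ w 0 = w.1 0 + x ^ (d - r) * w.2 0 := by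
    intro w; simp [Φ, diagScale_apply]
  have f1 : ∀ w, Φ w 1 = x ^ r * w.1 1 + w.2 1 := by
    intro w; simp [Φ, diagScale_apply]
  have f2 : ∀ w, Φ w 2 = x ^ r * w.1 2 + w.2 2 := by
    intro w; simp [Φ, diagScale_apply]
  have hxd : x ^ d = x ^ (d - r) * x ^ r := by rw [← pow_add]; congr 1; omega
  refine ⟨?_, ?_, ?_, ?_, ?_⟩
  · intro v hv
    rw [hK] at hv
    rw [Submodule.mem_prod, hK, hK, p10, p11, p12, p20, p21, p22]
    rw [pow_add] at hv
    rw [mul_add, mul_one, pow_add, hxd]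
    constructor
    · linear_combination hv
    · linear_combination (-x ^ r) * hv
  · intro w hw
    rw [Submodule.mem_prod, hK, hK, mul_add, mul_one, pow_add, hxd] at hw
    rw [hK, f0, f1, f2, pow_add]
    linear_combination (x ^ r) * hw.1 + hw.2
  · intro v v' h
    funext i
    fin_cases i
    · have := p20 v
      rw [h, p20] at this
      exact (neg_injective this).symm
    · have := p11 v
      rw [h, p11] at this
      exact this.symm
    · have := p12 v
      rw [h, p12] at this
      exact this.symm
  · intro w hw
    rw [Submodule.mem_prod, hK, hK] at hw
    constructor
    · intro h
      have h0 := congrFun h 0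
      have h1 := congrFun h 1
      have h2 := congrFun h 2
      rw [f0, Pi.zero_apply] at h0
      rw [f1, Pi.zero_apply] at h1
      rw [f2, Pi.zero_apply] at h2
      refine ⟨![-w.2 0, w.1 1, w.1 2], ?_, ?_⟩
      · rw [hK, pow_add]
        simp only [Matrix.cons_val]
        linear_combination hw.1 - x ^ (d * q) * h0
      · refine Prod.ext ?_ ?_
        · funext i
          fin_cases i
          · refine (p10 _).trans ?_
            simp only [Matrix.cons_val]
            show _ = w.1 0
            linear_combination -h0
          · exact p11 _
          · exact p12 _
        · funext i
          fin_cases i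
          · refine (p20 _).trans ?_
            simp
          · refine (p21 _).trans ?_
            simp only [Matrix.cons_val]
            show _ = w.2 1
            linear_combination -h1
          · refine (p22 _).trans ?_
            simp only [Matrix.cons_val]
            show _ = w.2 2
            linear_combination -h2
    · rintro ⟨v, -, rfl⟩
      funext i
      fin_cases i
      · refine (f0 _).trans ?_
        rw [p10, p20]; simp
      · refine (f1 _).trans ?_
        rw [p11, p21]; simp
      · refine (f2 _).trans ?_
        rw [p12, p22]; simp
  · intro u hu
    rw [hK] at hu
    obtain ⟨a0, a1, a2, b0, b1, b2, ha, hb, h0, h1, h2⟩ := hsplit _ _ _ hu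
    refine ⟨(![a0, a1, a2], ![b0, b1, b2]), ?_, ?_⟩
    · rw [Submodule.mem_prod, hK, hK]
      exact ⟨ha, hb⟩
    · funext i
      fin_cases i
      · exact (f0 _).trans h0
      · exact (f1 _).trans h1
      · exact (f2 _).trans h2

/-- The degree part of the statement. -/
lemma deg_aux {k R : Type*} [Field k] [CommRing R] [Algebra k R] (𝒜 : ℤ → Submodule k R)
    [GradedAlgebra 𝒜] (d q r α β γ b c : ℕ) (hr : r < d) (x : R) (hX : x ∈ 𝒜 (α : ℤ))
    (s : ℤ) :
    let Ψ : (Fin 3 → R) →ₗ[R] (Fin 3 → R) × (Fin 3 → R) :=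
      (diagScale ![x ^ (d - r), 1, 1]).prod (diagScale ![-1, -x ^ r, -x ^ r])
    let Φ : (Fin 3 → R) × (Fin 3 → R) →ₗ[R] (Fin 3 → R) :=
      (diagScale ![1, x ^ r, x ^ r]).comp (LinearMap.fst R _ _) +
        (diagScale ![x ^ (d - r), 1, 1]).comp (LinearMap.snd R _ _)
    (∀ (m : ℤ) (v : Fin 3 → R),
      pieceCond 𝒜 (m + (s - α * r) - α * (d * q + (d - r)))
        (m + (s - α * r) - β * b) (m + (s - α * r) - γ * c) v →
      pieceCond 𝒜 (m + (s - α * r) - α * (d * q)) (m + (s - α * r) - β * b)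
        (m + (s - α * r) - γ * c) (Ψ v).1 ∧
      pieceCond 𝒜 (m + s - α * (d * (q + 1))) (m + s - β * b)
        (m + s - γ * c) (Ψ v).2) ∧
    (∀ (m : ℤ) (w : (Fin 3 → R) × (Fin 3 → R)),
      pieceCond 𝒜 (m + (s - α * r) - α * (d * q)) (m + (s - α * r) - β * b)
        (m + (s - α * r) - γ * c) w.1 →
      pieceCond 𝒜 (m + s - α * (d * (q + 1))) (m + s - β * b)
        (m + s - γ * c) w.2 →
      pieceCond 𝒜 (m + s - α * (d * q + r)) (m + s - β * b)
        (m + s - γ * c) (Φ w)) := by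
  intro Ψ Φ
  have hmul : ∀ (n : ℕ) (i j : ℤ) (t : R), t ∈ 𝒜 i → (n : ℤ) * α + i = j →
      x ^ n * t ∈ 𝒜 j := by
    intro n i j t ht hj
    have := SetLike.mul_mem_graded (SetLike.pow_mem_graded n hX) ht
    rw [nsmul_eq_mul, hj] at this
    exact this
  have hcast : ∀ (i j : ℤ) (t : R), t ∈ 𝒜 i → i = j → t ∈ 𝒜 j := by
    rintro i j t ht rfl
    exact ht
  have hdr : ((d - r : ℕ) : ℤ) = d - r := by omega
  constructor
  · rintro m v ⟨h0, h1, h2⟩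
    refine ⟨⟨?_, ?_, ?_⟩, ?_, ?_, ?_⟩
    · have e : (Ψ v).1 0 = x ^ (d - r) * v 0 := by simp [Ψ, diagScale_apply]
      rw [e]
      exact hmul _ _ _ _ h0 (by rw [hdr]; ring)
    · simpa [Ψ, diagScale_apply] using h1
    · simpa [Ψ, diagScale_apply] using h2
    · have e : (Ψ v).2 0 = -v 0 := by simp [Ψ, diagScale_apply]
      rw [e]
      exact Submodule.neg_mem _ (hcast _ _ _ h0 (by ring))
    · have e : (Ψ v).2 1 = -(x ^ r * v 1) := by simp [Ψ, diagScale_apply]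
      rw [e]
      exact Submodule.neg_mem _ (hmul _ _ _ _ h1 (by ring))
    · have e : (Ψ v).2 2 = -(x ^ r * v 2) := by simp [Ψ, diagScale_apply]
      rw [e]
      exact Submodule.neg_mem _ (hmul _ _ _ _ h2 (by ring))
  · rintro m w ⟨h0, h1, h2⟩ ⟨g0, g1, g2⟩
    refine ⟨?_, ?_, ?_⟩
    · simp only [Φ, LinearMap.add_apply, LinearMap.comp_apply, LinearMap.fst_apply,
        LinearMap.snd_apply, Pi.add_apply, diagScale_apply, Matrix.cons_val, one_mul]
      exact Submodule.add_mem _ (hcast _ _ _ h0 (by ring))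
        (hmul _ _ _ _ g0 (by rw [hdr]; ring))
    · simp only [Φ, LinearMap.add_apply, LinearMap.comp_apply, LinearMap.fst_apply,
        LinearMap.snd_apply, Pi.add_apply, diagScale_apply, Matrix.cons_val, one_mul]
      exact Submodule.add_mem _ (hmul _ _ _ _ h1 (by ring)) g1
    · simp only [Φ, LinearMap.add_apply, LinearMap.comp_apply, LinearMap.fst_apply,
        LinearMap.snd_apply, Pi.add_apply, diagScale_apply, Matrix.cons_val, one_mul]
      exact Submodule.add_mem _ (hmul _ _ _ _ h2 (by ring)) g2

/-- For `R = k[X,Y,Z]/(X^d - F(Y,Z))`, graded with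
`deg X = α, deg Y = β, deg Z = γ` and `F ∈ k[Y,Z]` homogeneous of degree `dα`,
and `a = dq + r` with `0 ≤ r ≤ d - 1`, for every `s ∈ ℤ` there is a short
exact sequence of graded `R`-modules
`0 → Syz(X^{a+d-2r},Y^b,Z^c)(s-αr) →ψ Syz(X^{a-r},Y^b,Z^c)(s-αr) ⊕
Syz(X^{a+d-r},Y^b,Z^c)(s) →φ Syz(X^a,Y^b,Z^c)(s) → 0`, where
`ψ(h₁,h₂,h₃) = ((X^{d-r}h₁,h₂,h₃), (-h₁,-X^r h₂,-X^r h₃))` and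
`φ((f₁,f₂,f₃),(g₁,g₂,g₃)) = (f₁+X^{d-r}g₁, X^r f₂+g₂, X^r f₃+g₃)`. -/
theorem stmt_13 {k : Type*} [Field k] (d q r α β γ b c : ℕ) (hd : 1 ≤ d)
    (hα : 1 ≤ α) (hβ : 1 ≤ β) (hγ : 1 ≤ γ) (hr : r < d) (hb : 1 ≤ b) (hc : 1 ≤ c)
    (F : MvPolynomial (Fin 3) k) (hFsupp : F ∈ MvPolynomial.supported k {1, 2})
    (hFhom : F.IsWeightedHomogeneous ![α, β, γ] (d * α))
    (𝒜 : ℤ → Submodule k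
      (MvPolynomial (Fin 3) k ⧸ Ideal.span {MvPolynomial.X 0 ^ d - F}))
    [GradedAlgebra 𝒜]
    (hX : Ideal.Quotient.mk _ (MvPolynomial.X 0) ∈ 𝒜 (α : ℤ))
    (hY : Ideal.Quotient.mk _ (MvPolynomial.X 1) ∈ 𝒜 (β : ℤ))
    (hZ : Ideal.Quotient.mk _ (MvPolynomial.X 2) ∈ 𝒜 (γ : ℤ))
    (s : ℤ) :
    let R := MvPolynomial (Fin 3) k ⧸ Ideal.span {MvPolynomial.X 0 ^ d - F}
    let x : R := Ideal.Quotient.mk _ (MvPolynomial.X 0)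
    let y : R := Ideal.Quotient.mk _ (MvPolynomial.X 1)
    let z : R := Ideal.Quotient.mk _ (MvPolynomial.X 2)
    -- the four syzygy modules, for `a+d-2r = dq+(d-r)`, `a-r = dq`,
    -- `a+d-r = d(q+1)` and `a = dq+r`
    let K := fun l : ℕ => LinearMap.ker (syzMap ![x ^ l, y ^ b, z ^ c])
    let Ψ : (Fin 3 → R) →ₗ[R] (Fin 3 → R) × (Fin 3 → R) :=
      (diagScale ![x ^ (d - r), 1, 1]).prod (diagScale ![-1, -x ^ r, -x ^ r])
    let Φ : (Fin 3 → R) × (Fin 3 → R) →ₗ[R] (Fin 3 → R) :=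
      (diagScale ![1, x ^ r, x ^ r]).comp (LinearMap.fst R _ _) +
        (diagScale ![x ^ (d - r), 1, 1]).comp (LinearMap.snd R _ _)
    -- `ψ` and `φ` restrict to the syzygy modules …
    (∀ v ∈ K (d * q + (d - r)), Ψ v ∈ (K (d * q)).prod (K (d * (q + 1)))) ∧
    (∀ w ∈ (K (d * q)).prod (K (d * (q + 1))), Φ w ∈ K (d * q + r)) ∧
    -- … giving a short exact sequence: injectivity, exactness, surjectivity
    Function.Injective Ψ ∧
    (∀ w ∈ (K (d * q)).prod (K (d * (q + 1))),
      (Φ w = 0 ↔ ∃ v ∈ K (d * q + (d - r)), Ψ v = w)) ∧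
    (∀ u ∈ K (d * q + r), ∃ w ∈ (K (d * q)).prod (K (d * (q + 1))), Φ w = u) ∧
    -- … and the maps are homogeneous of degree 0 for the stated twists
    (∀ (m : ℤ) (v : Fin 3 → R),
      pieceCond 𝒜 (m + (s - α * r) - α * (d * q + (d - r)))
        (m + (s - α * r) - β * b) (m + (s - α * r) - γ * c) v →
      pieceCond 𝒜 (m + (s - α * r) - α * (d * q)) (m + (s - α * r) - β * b)
        (m + (s - α * r) - γ * c) (Ψ v).1 ∧
      pieceCond 𝒜 (m + s - α * (d * (q + 1))) (m + s - β * b)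
        (m + s - γ * c) (Ψ v).2) ∧
    (∀ (m : ℤ) (w : (Fin 3 → R) × (Fin 3 → R)),
      pieceCond 𝒜 (m + (s - α * r) - α * (d * q)) (m + (s - α * r) - β * b)
        (m + (s - α * r) - γ * c) w.1 →
      pieceCond 𝒜 (m + s - α * (d * (q + 1))) (m + s - β * b)
        (m + s - γ * c) w.2 →
      pieceCond 𝒜 (m + s - α * (d * q + r)) (m + s - β * b)
        (m + s - γ * c) (Φ w)) := by
  intro R x y z K Ψ Φ
  have h1 := ses_aux d q r b c hr x y z
    (fun u0 u1 u2 h => quot_split d q r b c hd hr F hFsupp x y z u0 u1 u2 rfl rfl rfl h)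
  have h2 := deg_aux 𝒜 d q r α β γ b c hr x hX s
  exact ⟨h1.1, h1.2.1, h1.2.2.1, h1.2.2.2.1, h1.2.2.2.2, h2.1, h2.2⟩
end

section
/- Let k be a field, d, α, β, γ ≥ 1, and R = k[X,Y,Z]/(X^d - F(Y,Z)) graded by deg X = α, deg Y = β, deg Z = γ, with F homogeneous of degree dα. Let a ≥ 1, a = dq + r with 0 ≤ r ≤ d-1, fix b, c ≥ 1, and write S(l) = Syz_R(X^l, Y^b, Z^c). Then the Hilbert series satisfy (1 - t^{αd})·H_{S(a)}(t) = (t^{αr} - t^{αd})·H_{S(a-r)}(t) + (1 - t^{αr})·H_{S(a+d-r)}(t). -/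
set_option maxHeartbeats 1000000
set_option synthInstance.maxHeartbeats 1000000

open MvPolynomial in
/-- Free basis `1, x, …, x^(d-1)` of the hypersurface ring over `k[Y,Z]`. -/
theorem aux_bij {k : Type*} [Field k] (d : ℕ) (f : MvPolynomial (Fin 2) k)
    (hd : d ≠ 0) (F : MvPolynomial (Fin 3) k) (hF : F = rename Fin.succ f) :
    Function.Bijective (fun u : Fin d → MvPolynomial (Fin 2) k =>
      ∑ i, Ideal.Quotient.mk (Ideal.span {X 0 ^ d - F}) (rename Fin.succ (u i)) *
        Ideal.Quotient.mk (Ideal.span {X 0 ^ d - F}) (X 0) ^ (i : ℕ)) := by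
  classical
  have hren : ∀ p : MvPolynomial (Fin 2) k,
      finSuccEquiv k 2 (rename Fin.succ p) = Polynomial.C p := by
    intro p
    induction p using MvPolynomial.induction_on with
    | C a => simp [finSuccEquiv_apply]
    | add p q hp hq => simp [hp, hq]
    | mul_X p i hp => simp only [map_mul, hp, rename_X, finSuccEquiv_X_succ]
  set g : Polynomial (MvPolynomial (Fin 2) k) := Polynomial.X ^ d - Polynomial.C f with hg
  have hψ : finSuccEquiv k 2 (X 0 ^ d - F) = g := by
    rw [map_sub, map_pow, finSuccEquiv_X_zero, hF, hren]
  have hsum : ∀ u : Fin d → MvPolynomial (Fin 2) k,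
      finSuccEquiv k 2 (∑ i, rename Fin.succ (u i) * X 0 ^ (i : ℕ)) =
        ∑ i, Polynomial.C (u i) * Polynomial.X ^ (i : ℕ) := by
    intro u
    simp only [map_sum, map_mul, map_pow, hren, finSuccEquiv_X_zero]
  have hmk : ∀ u : Fin d → MvPolynomial (Fin 2) k,
      ∑ i, Ideal.Quotient.mk (Ideal.span {X 0 ^ d - F}) (rename Fin.succ (u i)) *
        Ideal.Quotient.mk (Ideal.span {X 0 ^ d - F}) (X 0) ^ (i : ℕ) =
      Ideal.Quotient.mk (Ideal.span {X 0 ^ d - F})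
        (∑ i, rename Fin.succ (u i) * X 0 ^ (i : ℕ)) := by
    intro u
    simp only [map_sum, map_mul, map_pow]
  have hgm : g.Monic := Polynomial.monic_X_pow_sub_C f hd
  have hgd : g.degree = d := Polynomial.degree_X_pow_sub_C (Nat.pos_of_ne_zero hd) f
  have hcoef : ∀ (u : Fin d → MvPolynomial (Fin 2) k) (j : Fin d),
      (∑ i, Polynomial.C (u i) * Polynomial.X ^ (i : ℕ)).coeff (j : ℕ) = u j := by
    intro u j
    simp [Polynomial.coeff_C_mul, Polynomial.coeff_X_pow,
      Fin.val_inj]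
  constructor
  · intro u v huv
    simp only [hmk] at huv
    rw [Ideal.Quotient.eq, Ideal.mem_span_singleton] at huv
    have h2 := map_dvd (finSuccEquiv k 2) huv
    rw [hψ, map_sub, hsum, hsum] at h2
    have hdeg : ∀ u : Fin d → MvPolynomial (Fin 2) k,
        (∑ i, Polynomial.C (u i) * Polynomial.X ^ (i : ℕ)).degree < g.degree := by
      intro u
      rw [hgd]
      refine (Polynomial.degree_sum_le _ _).trans_lt ?_
      refine (Finset.sup_lt_iff (WithBot.bot_lt_coe d)).2 ?_
      intro i _
      exact (Polynomial.degree_C_mul_X_pow_le _ _).trans_lt (WithBot.coe_lt_coe.2 i.2)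
    have h0 := Polynomial.eq_zero_of_dvd_of_degree_lt h2
      ((Polynomial.degree_sub_le _ _).trans_lt (max_lt (hdeg u) (hdeg v)))
    rw [sub_eq_zero] at h0
    funext j
    rw [← hcoef u j, h0, hcoef]
  · intro a
    obtain ⟨p, rfl⟩ := Ideal.Quotient.mk_surjective a
    refine ⟨fun i => (finSuccEquiv k 2 p %ₘ g).coeff i, ?_⟩
    simp only [hmk]
    rw [Ideal.Quotient.eq, Ideal.mem_span_singleton]
    have hdv : g ∣ finSuccEquiv k 2 (∑ i : Fin d,
        rename Fin.succ ((finSuccEquiv k 2 p %ₘ g).coeff i) * X 0 ^ (i : ℕ) - p) := by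
      rw [map_sub, hsum]
      have : ∑ i : Fin d, Polynomial.C ((finSuccEquiv k 2 p %ₘ g).coeff i) *
          Polynomial.X ^ (i : ℕ) = finSuccEquiv k 2 p %ₘ g := by
        ext1 n
        by_cases hn : n < d
        · exact hcoef (fun i => (finSuccEquiv k 2 p %ₘ g).coeff i) ⟨n, hn⟩
        · rw [Polynomial.coeff_eq_zero_of_degree_lt (p := finSuccEquiv k 2 p %ₘ g)]
          · rw [Polynomial.finsetSum_coeff]
            refine Finset.sum_eq_zero fun i _ => ?_
            rw [Polynomial.coeff_C_mul_X_pow, if_neg]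
            have := i.2
            omega
          · refine (Polynomial.degree_modByMonic_lt _ hgm).trans_le ?_
            rw [hgd]
            exact_mod_cast not_lt.mp hn
      rw [this]
      refine ⟨- (finSuccEquiv k 2 p /ₘ g), ?_⟩
      have := Polynomial.modByMonic_add_div (finSuccEquiv k 2 p) g
      linear_combination this
    have := map_dvd (finSuccEquiv k 2).symm hdv
    rw [(AlgEquiv.symm_apply_eq _).2 hψ.symm] at this
    simpa only [AlgEquiv.symm_apply_apply] using this

open MvPolynomial in
theorem aux_finite {k : Type*} [Field k] (w : Fin 2 → ℤ) (hw : ∀ i, 0 < w i) (n : ℤ) :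
    Module.Finite k (weightedHomogeneousSubmodule k w n) := by
  have hfin : Set.Finite {e : Fin 2 →₀ ℕ | Finsupp.weight w e = n} := by
    have hI : Set.Finite {e : Fin 2 → ℕ | ∀ i, e i ≤ n.toNat} := by
      have := Set.finite_Iic (fun _ : Fin 2 => n.toNat)
      refine this.subset ?_
      intro e he i
      exact he i
    refine (hI.preimage (f := fun e : Fin 2 →₀ ℕ => (e : Fin 2 → ℕ))
      (DFunLike.coe_injective.injOn)).subset ?_
    intro e he i
    have he' : Finsupp.weight w e = n := he
    rw [Finsupp.weight_apply, Finsupp.sum_fintype _ _ (by simp)] at he'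
    simp only [Fin.sum_univ_two, nsmul_eq_mul] at he'
    have h0 := hw 0
    have h1 := hw 1
    have a0 : (e 0 : ℤ) ≤ e 0 * w 0 := le_mul_of_one_le_right (by positivity) h0
    have a1 : (e 1 : ℤ) ≤ e 1 * w 1 := le_mul_of_one_le_right (by positivity) h1
    fin_cases i <;> simp <;> omega
  have := hfin.to_subtype
  have : Finite {e : Fin 2 →₀ ℕ | Finsupp.weight w e = n} := hfin
  refine Module.Finite.of_injective
    (N := {e : Fin 2 →₀ ℕ | Finsupp.weight w e = n} → k)
    (LinearMap.pi fun e => (lcoeff k e.1).comp (Submodule.subtype _)) ?_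
  intro p p' hpp
  ext e
  by_cases he : Finsupp.weight w e = n
  · exact congrFun hpp ⟨e, he⟩
  · rw [IsWeightedHomogeneous.coeff_eq_zero p.2 e he, IsWeightedHomogeneous.coeff_eq_zero p'.2 e he]

open MvPolynomial in
theorem aux_grade {k : Type*} [Field k] {R : Type*} [CommRing R] [Algebra k R]
    (𝒜 : ℤ → Submodule k R) [GradedAlgebra 𝒜]
    (w : Fin 2 → ℤ) (φ : MvPolynomial (Fin 2) k →ₐ[k] R) (hφ : ∀ i, φ (X i) ∈ 𝒜 (w i))
    (α : ℤ) (x : R) (hx : x ∈ 𝒜 α) (d : ℕ)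
    (hbij : Function.Bijective (fun u : Fin d → MvPolynomial (Fin 2) k =>
      ∑ i, φ (u i) * x ^ (i : ℕ)))
    (u : Fin d → MvPolynomial (Fin 2) k) (n : ℤ) :
    (∑ i, φ (u i) * x ^ (i : ℕ)) ∈ 𝒜 n ↔
      ∀ i : Fin d, u i ∈ weightedHomogeneousSubmodule k w (n - α * (i : ℕ)) := by
  classical
  have hxp : ∀ i : ℕ, x ^ i ∈ 𝒜 (α * i) := by
    intro i
    have := SetLike.pow_mem_graded i hx
    simpa [mul_comm] using this
  have hmon : ∀ (e : Fin 2 →₀ ℕ) (a : k), φ (monomial e a) ∈ 𝒜 (Finsupp.weight w e) := by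
    intro e a
    have h0 := SetLike.pow_mem_graded (e 0) (hφ 0)
    have h1 := SetLike.pow_mem_graded (e 1) (hφ 1)
    have h := Submodule.smul_mem _ a (SetLike.mul_mem_graded h0 h1)
    rw [Finsupp.weight_apply, Finsupp.sum_fintype _ _ (by simp), Fin.sum_univ_two]
    convert h using 1
    rw [monomial_eq, Finsupp.prod_fintype _ _ (by simp), Fin.prod_univ_two]
    simp [← MvPolynomial.algebraMap_eq, Algebra.smul_def]
  have hproj : ∀ (p : MvPolynomial (Fin 2) k) (i : ℕ),
      GradedRing.proj 𝒜 n (φ p * x ^ i) =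
        φ (weightedHomogeneousComponent w (n - α * i) p) * x ^ i := by
    intro p i
    induction p using MvPolynomial.induction_on' with
    | add p q hp hq => simp only [map_add, add_mul, hp, hq]
    | monomial e a =>
      have hm := SetLike.mul_mem_graded (hmon e a) (hxp i)
      by_cases h : Finsupp.weight w e + α * i = n
      · have h2 : Finsupp.weight w e = n - α * i := by omega
        rw [h] at hm
        rw [GradedRing.proj_apply, DirectSum.decompose_of_mem_same _ hm,
          weightedHomogeneousComponent_of_mem
            ((mem_weightedHomogeneousSubmodule k w _ _).2 (isWeightedHomogeneous_monomial w e a h2)), if_pos rfl]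
      · have h2 : Finsupp.weight w e ≠ n - α * i := by omega
        rw [GradedRing.proj_apply, DirectSum.decompose_of_mem_ne _ hm h,
          weightedHomogeneousComponent_of_mem
            ((mem_weightedHomogeneousSubmodule k w _ _).2 (isWeightedHomogeneous_monomial w e a rfl)), if_neg h2.symm]
        simp
  have key : GradedRing.proj 𝒜 n (∑ i, φ (u i) * x ^ (i : ℕ)) =
      ∑ i : Fin d, φ (weightedHomogeneousComponent w (n - α * (i : ℕ)) (u i)) * x ^ (i : ℕ) := by
    rw [map_sum]
    exact Finset.sum_congr rfl fun i _ => hproj _ _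
  constructor
  · intro h
    rw [GradedRing.proj_apply, DirectSum.decompose_of_mem_same _ h] at key
    have := hbij.1 key
    intro i
    have h3 := congrFun this i
    rw [h3]
    exact weightedHomogeneousComponent_mem _ _ _
  · intro h
    have : ∑ i, φ (u i) * x ^ (i : ℕ) = GradedRing.proj 𝒜 n (∑ i, φ (u i) * x ^ (i : ℕ)) := by
      rw [key]
      refine Finset.sum_congr rfl fun i _ => ?_
      rw [weightedHomogeneousComponent_of_mem (h i), if_pos rfl]
    rw [this, GradedRing.proj_apply]
    exact SetLike.coe_mem _

open MvPolynomial in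
/-- Dimension of the degree `m` piece of `Syz(f^e, Y^b, Z^c)` over `k[Y,Z]`. -/
noncomputable def auxT {k : Type*} [Field k] (f : MvPolynomial (Fin 2) k) (w : Fin 2 → ℤ)
    (δ : ℤ) (b c e : ℕ) (m : ℤ) : Submodule k (Fin 3 → MvPolynomial (Fin 2) k) :=
  Submodule.restrictScalars k (LinearMap.ker (syzMap ![f ^ e, X 0 ^ b, X 1 ^ c]))
    ⊓ Submodule.pi Set.univ ![weightedHomogeneousSubmodule k w (m - δ * e),
      weightedHomogeneousSubmodule k w (m - w 0 * b),
      weightedHomogeneousSubmodule k w (m - w 1 * c)]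

theorem aux_mem {k R : Type*} [Field k] [CommRing R] [Algebra k R] (g0 g1 g2 : R)
    (A0 A1 A2 : Submodule k R) (v : Fin 3 → R) :
    v ∈ (Submodule.restrictScalars k (LinearMap.ker (syzMap ![g0, g1, g2]))
      ⊓ Submodule.pi Set.univ ![A0, A1, A2]) ↔
    (v 0 * g0 + v 1 * g1 + v 2 * g2 = 0 ∧ v 0 ∈ A0 ∧ v 1 ∈ A1 ∧ v 2 ∈ A2) := by
  simp [syzMap, Fin.sum_univ_three, Submodule.mem_pi, Fin.forall_fin_succ]

open MvPolynomial in
theorem aux_memT {k : Type*} [Field k] (f : MvPolynomial (Fin 2) k) (w : Fin 2 → ℤ)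
    (δ : ℤ) (b c e : ℕ) (m : ℤ) (v : Fin 3 → MvPolynomial (Fin 2) k) :
    v ∈ auxT f w δ b c e m ↔
    (v 0 * f ^ e + v 1 * X 0 ^ b + v 2 * X 1 ^ c = 0 ∧
      v 0 ∈ weightedHomogeneousSubmodule k w (m - δ * e) ∧
      v 1 ∈ weightedHomogeneousSubmodule k w (m - w 0 * b) ∧
      v 2 ∈ weightedHomogeneousSubmodule k w (m - w 1 * c)) :=
  aux_mem _ _ _ _ _ _ v

open MvPolynomial in
theorem aux_T_finite {k : Type*} [Field k] (f : MvPolynomial (Fin 2) k) (w : Fin 2 → ℤ)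
    (hw : ∀ i, 0 < w i) (δ : ℤ) (b c e : ℕ) (m : ℤ) : Module.Finite k (auxT f w δ b c e m) := by
  have i0 := aux_finite (k := k) w hw (m - δ * e)
  have i1 := aux_finite (k := k) w hw (m - w 0 * b)
  have i2 := aux_finite (k := k) w hw (m - w 1 * c)
  have hm : ∀ v : auxT f w δ b c e m, _ := fun v => (aux_mem _ _ _ _ _ _ v.1).1 v.2
  let L : auxT f w δ b c e m →ₗ[k] (weightedHomogeneousSubmodule k w (m - δ * e) ×
      weightedHomogeneousSubmodule k w (m - w 0 * b) ×
      weightedHomogeneousSubmodule k w (m - w 1 * c)) :=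
    { toFun := fun v => (⟨v.1 0, (hm v).2.1⟩, ⟨v.1 1, (hm v).2.2.1⟩, ⟨v.1 2, (hm v).2.2.2⟩)
      map_add' := fun _ _ => rfl
      map_smul' := fun _ _ => rfl }
  refine Module.Finite.of_injective L ?_
  intro v v' h
  have h0 : v.1 0 = v'.1 0 := congrArg (fun z => z.1.1) h
  have h1 : v.1 1 = v'.1 1 := congrArg (fun z => z.2.1.1) h
  have h2 : v.1 2 = v'.1 2 := congrArg (fun z => z.2.2.1) h
  apply Subtype.ext
  funext i
  fin_cases i
  · exact h0
  · exact h1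
  · exact h2

open MvPolynomial in
theorem aux_dim {k : Type*} [Field k] {R : Type*} [CommRing R] [Algebra k R]
    (𝒜 : ℤ → Submodule k R) [GradedAlgebra 𝒜]
    (w : Fin 2 → ℤ) (hw : ∀ i, 0 < w i)
    (φ : MvPolynomial (Fin 2) k →ₐ[k] R) (hφ : ∀ i, φ (X i) ∈ 𝒜 (w i))
    (α : ℤ) (x : R) (hx : x ∈ 𝒜 α) (d : ℕ)
    (hbij : Function.Bijective (fun u : Fin d → MvPolynomial (Fin 2) k =>
      ∑ i, φ (u i) * x ^ (i : ℕ)))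
    (f : MvPolynomial (Fin 2) k) (hf : x ^ d = φ f) (b c l : ℕ) (m : ℤ)
    (σ : Equiv.Perm (Fin d)) (e : Fin d → ℕ) (hσ : ∀ j, (σ j : ℕ) + l = j + d * e j) :
    Module.finrank k
      ↥(Submodule.restrictScalars k
          (LinearMap.ker (syzMap ![x ^ l, φ (X 0) ^ b, φ (X 1) ^ c]))
        ⊓ Submodule.pi Set.univ ![𝒜 (m - α * l), 𝒜 (m - w 0 * b), 𝒜 (m - w 1 * c)]) =
    ∑ j : Fin d, Module.finrank k (auxT f w (α * d) b c (e j) (m - α * (j : ℕ))) := by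
  have hfin := fun (e : ℕ) (m : ℤ) => aux_T_finite f w hw (α * d) b c e m
  rw [← Module.finrank_pi_fintype]
  symm
  have hG := fun u n => aux_grade 𝒜 w φ hφ α x hx d hbij u n
  -- the permuted coordinates
  have hperm : ∀ u : Fin d → MvPolynomial (Fin 2) k,
      ∑ j, φ (u j) * x ^ (σ j : ℕ) = ∑ i, φ (u (σ.symm i)) * x ^ (i : ℕ) := by
    intro u
    rw [← Equiv.sum_comp σ (fun i => φ (u (σ.symm i)) * x ^ (i : ℕ))]
    refine Finset.sum_congr rfl fun j _ => ?_
    rw [Equiv.symm_apply_apply]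
  have hmem : ∀ t : Fin d → Fin 3 → MvPolynomial (Fin 2) k,
      (![∑ j, φ (t j 0) * x ^ (σ j : ℕ), ∑ j, φ (t j 1) * x ^ (j : ℕ),
        ∑ j, φ (t j 2) * x ^ (j : ℕ)] : Fin 3 → R) ∈
      (Submodule.restrictScalars k
          (LinearMap.ker (syzMap ![x ^ l, φ (X 0) ^ b, φ (X 1) ^ c]))
        ⊓ Submodule.pi Set.univ ![𝒜 (m - α * l), 𝒜 (m - w 0 * b), 𝒜 (m - w 1 * c)]) ↔
      ∀ j, t j ∈ auxT f w (α * d) b c (e j) (m - α * (j : ℕ)) := by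
    intro t
    rw [aux_mem]
    simp only [aux_memT]
    simp only [Matrix.cons_val_zero, Matrix.cons_val_one, Matrix.cons_val]
    have e1 : (∑ j, φ (t j 0) * x ^ (σ j : ℕ)) * x ^ l +
        (∑ j, φ (t j 1) * x ^ (j : ℕ)) * φ (X 0) ^ b +
        (∑ j, φ (t j 2) * x ^ (j : ℕ)) * φ (X 1) ^ c =
        ∑ j, φ (t j 0 * f ^ e j + t j 1 * X 0 ^ b + t j 2 * X 1 ^ c) * x ^ (j : ℕ) := by
      simp only [Finset.sum_mul, ← Finset.sum_add_distrib]
      refine Finset.sum_congr rfl fun j _ => ?_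
      have : x ^ (σ j : ℕ) * x ^ l = x ^ (j : ℕ) * φ f ^ e j := by
        rw [← pow_add, hσ, pow_add, pow_mul, hf]
      simp only [map_add, map_mul, map_pow]
      linear_combination φ (t j 0) * this
    have e2 : (∑ j, φ (t j 0 * f ^ e j + t j 1 * X 0 ^ b + t j 2 * X 1 ^ c) * x ^ (j : ℕ) = 0) ↔
        ∀ j, t j 0 * f ^ e j + t j 1 * X 0 ^ b + t j 2 * X 1 ^ c = 0 := by
      constructor
      · intro h
        have := hbij.1 (a₁ := fun j => t j 0 * f ^ e j + t j 1 * X 0 ^ b + t j 2 * X 1 ^ c)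
          (a₂ := fun _ => 0) (by simpa using h)
        exact fun j => congrFun this j
      · intro h
        simp [h]
    rw [e1, e2, hperm (fun j => t j 0), hG (fun j => t (σ.symm j) 0), hG (fun j => t j 1),
      hG (fun j => t j 2)]
    have e3 : (∀ i : Fin d, t (σ.symm i) 0 ∈
          weightedHomogeneousSubmodule k w (m - α * l - α * (i : ℕ))) ↔
        ∀ j : Fin d, t j 0 ∈
          weightedHomogeneousSubmodule k w (m - α * (j : ℕ) - α * d * (e j : ℕ)) := by
      rw [← σ.forall_congr_right]
      refine forall_congr' fun j => ?_
      rw [Equiv.symm_apply_apply]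
      have : m - α * l - α * (σ j : ℕ) = m - α * (j : ℕ) - α * d * (e j : ℕ) := by
        have := congrArg (Nat.cast : ℕ → ℤ) (hσ j)
        push_cast at this
        linear_combination - α * this
      rw [this]
    rw [e3]
    simp only [sub_right_comm m _ (α * _), forall_and]
  let L : (∀ j : Fin d, auxT f w (α * d) b c (e j) (m - α * (j : ℕ))) →ₗ[k]
      ↥(Submodule.restrictScalars k
          (LinearMap.ker (syzMap ![x ^ l, φ (X 0) ^ b, φ (X 1) ^ c]))
        ⊓ Submodule.pi Set.univ ![𝒜 (m - α * l), 𝒜 (m - w 0 * b), 𝒜 (m - w 1 * c)]) :=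
    { toFun := fun t => ⟨_, (hmem (fun j => (t j).1)).2 fun j => (t j).2⟩
      map_add' := by
        intro t t'
        apply Subtype.ext
        funext i
        fin_cases i <;> simp [add_mul, Finset.sum_add_distrib]
      map_smul' := by
        intro a t
        apply Subtype.ext
        funext i
        fin_cases i <;> simp [Finset.smul_sum] }
  refine LinearEquiv.finrank_eq (LinearEquiv.ofBijective L ⟨?_, ?_⟩)
  · intro t t' h
    have h' := congrArg Subtype.val h
    have h0 : ∑ j, φ ((t j).1 0) * x ^ (σ j : ℕ) = ∑ j, φ ((t' j).1 0) * x ^ (σ j : ℕ) :=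
      congrFun h' 0
    have h1 : ∑ j, φ ((t j).1 1) * x ^ (j : ℕ) = ∑ j, φ ((t' j).1 1) * x ^ (j : ℕ) :=
      congrFun h' 1
    have h2 : ∑ j, φ ((t j).1 2) * x ^ (j : ℕ) = ∑ j, φ ((t' j).1 2) * x ^ (j : ℕ) :=
      congrFun h' 2
    rw [hperm (fun j => (t j).1 0), hperm (fun j => (t' j).1 0)] at h0
    have g0 := hbij.1 (a₁ := fun j => (t (σ.symm j)).1 0) (a₂ := fun j => (t' (σ.symm j)).1 0) h0
    have g1 := hbij.1 (a₁ := fun j => (t j).1 1) (a₂ := fun j => (t' j).1 1) h1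
    have g2 := hbij.1 (a₁ := fun j => (t j).1 2) (a₂ := fun j => (t' j).1 2) h2
    funext j
    apply Subtype.ext
    funext i
    fin_cases i
    · obtain ⟨i, rfl⟩ := σ.symm.surjective j
      exact congrFun g0 i
    · exact congrFun g1 j
    · exact congrFun g2 j
  · rintro ⟨v, hv⟩
    obtain ⟨u0, h0⟩ := hbij.2 (v 0)
    obtain ⟨u1, h1⟩ := hbij.2 (v 1)
    obtain ⟨u2, h2⟩ := hbij.2 (v 2)
    have hv' : (![∑ j, φ ((fun j => (![u0 (σ j), u1 j, u2 j] : Fin 3 → _)) j 0) * x ^ (σ j : ℕ),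
        ∑ j, φ ((fun j => (![u0 (σ j), u1 j, u2 j] : Fin 3 → _)) j 1) * x ^ (j : ℕ),
        ∑ j, φ ((fun j => (![u0 (σ j), u1 j, u2 j] : Fin 3 → _)) j 2) * x ^ (j : ℕ)] :
        Fin 3 → R) = v := by
      funext i
      fin_cases i
      · have h0' : ∑ i, φ (u0 i) * x ^ (i : ℕ) = v 0 := h0
        rw [← Equiv.sum_comp σ] at h0'
        simpa using h0'
      · simpa using h1
      · simpa using h2
    have ht := (hmem (fun j => ![u0 (σ j), u1 j, u2 j])).1 (by rw [hv']; exact hv)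
    refine ⟨fun j => ⟨_, ht j⟩, ?_⟩
    apply Subtype.ext
    exact hv'

theorem aux_comb (d r : ℕ) (hr : r < d) (α m : ℤ) (p p' : ℤ → ℕ) :
    (∑ j : Fin d, (if (j : ℕ) < r then p' else p) (m - α * (j : ℕ)))
      + (∑ j : Fin d, p (m - α * d - α * (j : ℕ)))
      + (∑ j : Fin d, p' (m - α * r - α * (j : ℕ)))
    = (∑ j : Fin d, (if (j : ℕ) < r then p' else p) (m - α * d - α * (j : ℕ)))
      + (∑ j : Fin d, p (m - α * r - α * (j : ℕ)))
      + (∑ j : Fin d, p' (m - α * (j : ℕ))) := by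
  obtain ⟨s, rfl⟩ := Nat.exists_eq_add_of_le hr.le
  have hA : ∀ g : ℕ → ℕ, ∑ j : Fin (r + s), g j =
      ∑ j ∈ Finset.range r, g j + ∑ j ∈ Finset.range s, g (r + j) := by
    intro g
    rw [Fin.sum_univ_eq_sum_range, Finset.sum_range_add]
  have hB : ∀ g : ℕ → ℕ, ∑ j : Fin (r + s), g j =
      ∑ j ∈ Finset.range s, g j + ∑ j ∈ Finset.range r, g (s + j) := by
    intro g
    rw [Fin.sum_univ_eq_sum_range, add_comm, Finset.sum_range_add]
  rw [hA (fun j => (if j < r then p' else p) (m - α * j)),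
    hA (fun j => p (m - α * (r + s : ℕ) - α * j)),
    hB (fun j => p' (m - α * r - α * j)),
    hA (fun j => (if j < r then p' else p) (m - α * (r + s : ℕ) - α * j)),
    hB (fun j => p (m - α * r - α * j)),
    hA (fun j => p' (m - α * j))]
  have c1 : ∀ (h : ℕ → ℤ), ∑ j ∈ Finset.range r, (if j < r then p' else p) (h j) =
      ∑ j ∈ Finset.range r, p' (h j) := by
    intro h
    refine Finset.sum_congr rfl fun j hj => ?_
    rw [if_pos (Finset.mem_range.1 hj)]
  have c2 : ∀ (h : ℕ → ℤ), ∑ j ∈ Finset.range s, (if r + j < r then p' else p) (h j) =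
      ∑ j ∈ Finset.range s, p (h j) := by
    intro h
    refine Finset.sum_congr rfl fun j hj => ?_
    rw [if_neg (by omega)]
  rw [c1, c1, c2, c2]
  have d1 : ∀ (P : ℤ → ℕ), ∑ j ∈ Finset.range s, P (m - α * (r + j : ℕ)) =
      ∑ j ∈ Finset.range s, P (m - α * r - α * j) := by
    intro P
    refine Finset.sum_congr rfl fun j _ => ?_
    congr 1
    push_cast
    ring
  have d2 : ∀ (P : ℤ → ℕ), ∑ j ∈ Finset.range r, P (m - α * r - α * (s + j : ℕ)) =
      ∑ j ∈ Finset.range r, P (m - α * (r + s : ℕ) - α * j) := by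
    intro P
    refine Finset.sum_congr rfl fun j _ => ?_
    congr 1
    push_cast
    ring
  rw [d1, d1, d2, d2]
  ring

/-- The cyclic shift `j ↦ j - r mod d`. -/
theorem aux_perm (d r : ℕ) (hr : r < d) : ∃ σ : Equiv.Perm (Fin d), ∀ j : Fin d,
    (σ j : ℕ) + r = j + d * (if (j : ℕ) < r then 1 else 0) := by
  let s : Fin d → Fin d := fun j => ⟨if (j : ℕ) < r then j + d - r else j - r, by
    have := j.2
    split_ifs <;> omega⟩
  have hs : Function.Injective s := by
    intro i j h
    have := congrArg Fin.val h
    have hi := i.2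
    have hj := j.2
    apply Fin.ext
    simp only [s] at this
    split_ifs at this <;> omega
  refine ⟨Equiv.ofBijective s (Finite.injective_iff_bijective.1 hs), fun j => ?_⟩
  have hj := j.2
  simp only [Equiv.ofBijective_apply, s]
  split_ifs <;> omega


/-- For `R = k[X,Y,Z]/(X^d - F(Y,Z))`, graded with
`deg X = α, deg Y = β, deg Z = γ` and `F ∈ k[Y,Z]` homogeneous of degree `dα`,
and `a = dq + r` with `0 ≤ r ≤ d - 1`, the Hilbert series of the syzygy
modules `S(l) = Syz_R(X^l, Y^b, Z^c)` satisfy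
`(1 - t^{αd})·H_{S(a)} = (t^{αr} - t^{αd})·H_{S(a-r)} + (1 - t^{αr})·H_{S(a+d-r)}`;
this is stated coefficientwise in terms of the dimensions
`h l m = dim_k S(l)_m` of the graded pieces (whose degree-`m` elements have
components in `𝒜 (m - αl)`, `𝒜 (m - βb)`, `𝒜 (m - γc)`), with
`a - r = dq` and `a + d - r = d(q+1)`. -/
theorem stmt_14 {k : Type*} [Field k] (d q r α β γ b c : ℕ) (hd : 1 ≤ d)
    (hα : 1 ≤ α) (hβ : 1 ≤ β) (hγ : 1 ≤ γ) (hr : r < d) (hb : 1 ≤ b) (hc : 1 ≤ c)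
    (F : MvPolynomial (Fin 3) k) (hFsupp : F ∈ MvPolynomial.supported k {1, 2})
    (hFhom : F.IsWeightedHomogeneous ![α, β, γ] (d * α))
    (𝒜 : ℤ → Submodule k
      (MvPolynomial (Fin 3) k ⧸ Ideal.span {MvPolynomial.X 0 ^ d - F}))
    [GradedAlgebra 𝒜]
    (hX : Ideal.Quotient.mk _ (MvPolynomial.X 0) ∈ 𝒜 (α : ℤ))
    (hY : Ideal.Quotient.mk _ (MvPolynomial.X 1) ∈ 𝒜 (β : ℤ))
    (hZ : Ideal.Quotient.mk _ (MvPolynomial.X 2) ∈ 𝒜 (γ : ℤ)) :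
    let R := MvPolynomial (Fin 3) k ⧸ Ideal.span {MvPolynomial.X 0 ^ d - F}
    let x : R := Ideal.Quotient.mk _ (MvPolynomial.X 0)
    let y : R := Ideal.Quotient.mk _ (MvPolynomial.X 1)
    let z : R := Ideal.Quotient.mk _ (MvPolynomial.X 2)
    -- `h l m` is the `k`-dimension of the degree-`m` piece of `Syz_R(X^l,Y^b,Z^c)`
    let h : ℕ → ℤ → ℕ := fun l m => Module.finrank k
      ↥(Submodule.restrictScalars k (LinearMap.ker (syzMap ![x ^ l, y ^ b, z ^ c]))
        ⊓ Submodule.pi Set.univ ![𝒜 (m - α * l), 𝒜 (m - β * b), 𝒜 (m - γ * c)])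
    ∀ m : ℤ,
      h (d * q + r) m + h (d * q) (m - α * d) + h (d * (q + 1)) (m - α * r)
        = h (d * q + r) (m - α * d) + h (d * q) (m - α * r)
          + h (d * (q + 1)) m := by
  intro R x y z h m
  obtain ⟨f, hf⟩ := MvPolynomial.exists_rename_eq_of_vars_subset_range F (Fin.succ : Fin 2 → Fin 3)
    (Fin.succ_injective 2) (by
      refine (MvPolynomial.mem_supported.1 hFsupp).trans ?_
      rintro i (rfl | rfl)
      · exact ⟨0, rfl⟩
      · exact ⟨1, rfl⟩)
  let φ : MvPolynomial (Fin 2) k →ₐ[k] R :=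
    (Ideal.Quotient.mkₐ k _).comp (MvPolynomial.rename Fin.succ)
  let w : Fin 2 → ℤ := ![(β : ℤ), (γ : ℤ)]
  have hw : ∀ i, 0 < w i := by
    intro i
    fin_cases i
    · exact Int.natCast_pos.2 hβ
    · exact Int.natCast_pos.2 hγ
  have hy : φ (MvPolynomial.X 0) = y := by
    change Ideal.Quotient.mk _ (MvPolynomial.rename Fin.succ (MvPolynomial.X 0)) = _
    rw [MvPolynomial.rename_X]
    rfl
  have hz : φ (MvPolynomial.X 1) = z := by
    change Ideal.Quotient.mk _ (MvPolynomial.rename Fin.succ (MvPolynomial.X 1)) = _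
    rw [MvPolynomial.rename_X]
    rfl
  have hφ : ∀ i, φ (MvPolynomial.X i) ∈ 𝒜 (w i) := by
    intro i
    fin_cases i
    · exact hy ▸ hY
    · exact hz ▸ hZ
  have hbij : Function.Bijective (fun u : Fin d → MvPolynomial (Fin 2) k =>
      ∑ i, φ (u i) * x ^ (i : ℕ)) := aux_bij d f (by omega) F hf.symm
  have hxd : x ^ d = φ f := by
    change Ideal.Quotient.mk _ (MvPolynomial.X 0) ^ d =
      Ideal.Quotient.mk _ (MvPolynomial.rename Fin.succ f)
    rw [hf, ← map_pow, Ideal.Quotient.eq]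
    exact Ideal.subset_span rfl
  obtain ⟨p, hdim⟩ : ∃ p : ℕ → ℤ → ℕ,
      ∀ (l : ℕ) (n : ℤ) (σ : Equiv.Perm (Fin d)) (e : Fin d → ℕ),
      (∀ j, (σ j : ℕ) + l = j + d * e j) → h l n =
      ∑ j : Fin d, p (e j) (n - α * (j : ℕ)) := by
    refine ⟨fun e n => Module.finrank k (auxT f w (α * d) b c e n), ?_⟩
    intro l n σ e hσ
    have := aux_dim 𝒜 w hw φ hφ α x hX d hbij f hxd b c l n σ e hσ
    rw [hy, hz] at this
    exact this
  obtain ⟨σ, hσ⟩ := aux_perm d r hr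
  have H1 : ∀ n, h (d * q + r) n =
      ∑ j : Fin d, (if (j : ℕ) < r then p (q + 1) else p q) (n - α * (j : ℕ)) := by
    intro n
    rw [hdim (d * q + r) n σ (fun j => if (j : ℕ) < r then q + 1 else q)]
    · refine Finset.sum_congr rfl fun j _ => ?_
      split_ifs <;> rfl
    · intro j
      have := hσ j
      split_ifs at this ⊢
      · rw [mul_add]
        omega
      · omega
  have H2 : ∀ (e : ℕ) n, h (d * e) n = ∑ j : Fin d, p e (n - α * (j : ℕ)) := by
    intro e n
    exact hdim (d * e) n 1 (fun _ => e) (fun j => rfl)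
  rw [H1, H1, H2, H2, H2, H2]
  exact aux_comb d r hr α m _ _
end
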